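/- There is a constant C₆ depending only on C₀, n and d such that for all cubes P, Q, R, δ(P,R) ≤ C₆ + δ(P,Q) + δ(Q,R). -/

import Mathlib

open MeasureTheory Metric Set Filter
open scoped ENNReal NNReal

noncomputable section

/-- The ambient Euclidean space `ℝ^d`. -/
abbrev Euc (d : ℕ) := EuclideanSpace ℝ (Fin d)

/-- A closed axis-parallel cube in `ℝ^d`, given by its center and side length. -/
structure Cube (d : ℕ) where
  center : Euc d
  side : ℝ

namespace Cube

variable {d : ℕ}

/-- The set of points of the cube. -/
def toSet (Q : Cube d) : Set (Euc d) := {x | ∀ i, |x i - Q.center i| ≤ Q.side / 2}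

/-- The concentric dilation `ρQ`. -/
def dilate (Q : Cube d) (ρ : ℝ) : Cube d := ⟨Q.center, ρ * Q.side⟩

/-- `Q.encl R` is the smallest cube concentric with `Q` containing `Q ∪ R`
(denoted `Q_R` in the paper). -/
def encl (Q R : Cube d) : Cube d :=
  ⟨Q.center, max Q.side (⨆ i, 2 * |R.center i - Q.center i| + R.side)⟩

end Cube

variable {d : ℕ}

/-- The support of a measure: the points all of whose neighbourhoods have positive
measure. -/
def msupport (μ : Measure (Euc d)) : Set (Euc d) := {x | ∀ r > 0, 0 < μ (ball x r)}

/-- A cube of the lattice: positive side length and centered at a point of `supp μ`. -/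
def IsCube (μ : Measure (Euc d)) (Q : Cube d) : Prop :=
  Q.center ∈ msupport μ ∧ 0 < Q.side

/-- The growth condition `μ(B(x,r)) ≤ C₀ rⁿ` for all `x ∈ supp μ`, `r > 0`. -/
def GrowthCond (μ : Measure (Euc d)) (C₀ n : ℝ) : Prop :=
  ∀ x ∈ msupport μ, ∀ r : ℝ, 0 < r → μ (ball x r) ≤ ENNReal.ofReal (C₀ * r ^ n)

/-- The coefficient `δ(Q,R)`. -/
def cdelta (μ : Measure (Euc d)) (n : ℝ) (Q R : Cube d) : ℝ :=
  max (∫ x in (Q.encl R).toSet \ Q.toSet, ‖x - Q.center‖ ^ (-n) ∂μ)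
      (∫ x in (R.encl Q).toSet \ R.toSet, ‖x - R.center‖ ^ (-n) ∂μ)

/-- An `(α,β)`-doubling cube: `μ(αQ) ≤ β μ(Q)`. -/
def IsDoublingWith (μ : Measure (Euc d)) (α β : ℝ) (Q : Cube d) : Prop :=
  μ (Q.dilate α).toSet ≤ ENNReal.ofReal β * μ Q.toSet

/-- A `(2,2^(d+1))`-doubling cube. -/
def IsDoubling (μ : Measure (Euc d)) (Q : Cube d) : Prop :=
  μ (Q.dilate 2).toSet ≤ 2 ^ (d + 1) * μ Q.toSet

/-- An `n`-dimensional Calderón–Zygmund kernel with size constant `C₁`,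
regularity constant `C₂` and regularity exponent `δ`. -/
structure IsCZKernel (d : ℕ) (n C₁ C₂ δ : ℝ) (k : Euc d → Euc d → ℝ) : Prop where
  measurable : Measurable (Function.uncurry k)
  size : ∀ x y, x ≠ y → |k x y| ≤ C₁ / ‖x - y‖ ^ n
  reg : ∀ x x' y : Euc d, ‖x - x'‖ ≤ ‖x - y‖ / 2 →
    |k x y - k x' y| + |k y x - k y x'| ≤ C₂ * ‖x - x'‖ ^ δ / ‖x - y‖ ^ (n + δ)

/-- The truncated operator `T_ε`. -/
def trunc (μ : Measure (Euc d)) (k : Euc d → Euc d → ℝ) (ε : ℝ) (f : Euc d → ℝ)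
    (x : Euc d) : ℝ :=
  ∫ y in {y | ε < dist x y}, k x y * f y ∂μ

/-- `T_ε χ_Q`, the truncated operator applied to the characteristic function of a
cube `Q`. -/
def truncCube (μ : Measure (Euc d)) (k : Euc d → Euc d → ℝ) (ε : ℝ) (Q : Cube d)
    (x : Euc d) : ℝ :=
  ∫ y in {y | ε < dist x y} ∩ Q.toSet, k x y ∂μ

/-- The function representing `T_ε(1)` modulo additive constants, relative to a
base point `x₀`. -/
def truncOne (μ : Measure (Euc d)) (k : Euc d → Euc d → ℝ) (x₀ : Euc d) (ε : ℝ)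
    (x : Euc d) : ℝ :=
  ∫ y, ({y | ε < dist x y}.indicator (fun z => k x z) y
      - {y | ε < dist x₀ y}.indicator (fun z => k x₀ z) y) ∂μ

/-- `f ∈ BMO_ρ(μ)` with constant `C`. -/
def BMOWith (μ : Measure (Euc d)) (ρ C : ℝ) (f : Euc d → ℝ) : Prop :=
  ∀ Q : Cube d, IsCube μ Q →
    ∫ x in Q.toSet, |f x - ⨍ y in Q.toSet, f y ∂μ| ∂μ ≤ C * (μ (Q.dilate ρ).toSet).toReal

/-- `f ∈ RBMO(μ)` with constant `C`. -/
def RBMOWith (μ : Measure (Euc d)) (n C : ℝ) (f : Euc d → ℝ) : Prop :=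
  (∀ Q : Cube d, IsCube μ Q → IsDoubling μ Q →
    ∫ x in Q.toSet, |f x - ⨍ y in Q.toSet, f y ∂μ| ∂μ ≤ C * (μ Q.toSet).toReal) ∧
  (∀ Q R : Cube d, IsCube μ Q → IsCube μ R → IsDoubling μ Q → IsDoubling μ R →
    Q.toSet ⊆ R.toSet →
    |(⨍ x in Q.toSet, f x ∂μ) - ⨍ x in R.toSet, f x ∂μ| ≤ C * (1 + cdelta μ n Q R))

/-- The distance between two sets. -/
def setDist (s t : Set (Euc d)) : ℝ := sInf (Set.image2 dist s t)

/-- `δ(x, R)` for a point `x`, defined through the smallest cube centered at `x`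
containing `R`; with values in `[0,∞]`. -/
def deltaPt (μ : Measure (Euc d)) (n : ℝ) (x : Euc d) (R : Cube d) : ℝ≥0∞ :=
  ∫⁻ y in ((Cube.mk x 0).encl R).toSet \ {x}, ENNReal.ofReal (‖y - x‖ ^ (-n)) ∂μ

/-- `δ(Q, ℝ^d)`, with values in `[0,∞]`. -/
def deltaFull (μ : Measure (Euc d)) (n : ℝ) (Q : Cube d) : ℝ≥0∞ :=
  ∫⁻ x in Q.toSetᶜ, ENNReal.ofReal (‖x - Q.center‖ ^ (-n)) ∂μ

/-- The integral operator with kernel `s`. -/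
def Sop (μ : Measure (Euc d)) (s : Euc d → Euc d → ℝ) (f : Euc d → ℝ) (x : Euc d) : ℝ :=
  ∫ y, s x y * f y ∂μ

/-- The difference operators `D_k = S_k - S_{k-1}`. -/
def Dop (μ : Measure (Euc d)) (s : ℤ → Euc d → Euc d → ℝ) (j : ℤ) (f : Euc d → ℝ) :
    Euc d → ℝ :=
  fun x => Sop μ (s j) f x - Sop μ (s (j - 1)) f x

/-!
Let `M = ℓ(P_Q)` and `s = ℓ(Q_R)`; then `ℓ(P_R) ≤ M + s`. Split the domain `P_R ∖ P` of the first
integral in `δ(P,R)` into its parts in `P_Q`, in `Q_R ∖ P_Q` and outside `P_Q ∪ Q_R`. The first part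
contributes at most `δ(P,Q)`. The last one lies in an annulus around `z_P` whose radii are both
comparable to `M + s`, so growth at `z_P` bounds its contribution by a constant. On the middle part,
which is disjoint from `Q`, the mean value inequality
`|x - z_P|^{-n} ≤ |x - z_Q|^{-n} + n |z_P - z_Q| |x - z_P|^{-n-1}` replaces `z_P` by `z_Q`, and the
error integrates to a constant: `|z_P - z_Q| ≲ M`, while summing over dyadic annuli gives
`∫_{|x - z_P| ≥ M/2} |x - z_P|^{-n-1} dμ ≲ 1/M`. The second integral is the same with `P` and `R`
exchanged.
-/

theorem one_sub_mul_le_one_add_rpow_neg {n u : ℝ} (hn : 0 ≤ n) (hu : 0 ≤ u) :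
    1 - n * u ≤ (1 + u) ^ (-n) :=
  calc 1 - n * u ≤ Real.exp (-(n * u)) := Real.one_sub_le_exp_neg _
    _ = Real.exp u ^ (-n) := by rw [← Real.exp_mul]; ring_nf
    _ ≤ (1 + u) ^ (-n) := Real.rpow_le_rpow_of_nonpos (by positivity)
        (by linarith [Real.add_one_le_exp u]) (neg_nonpos.2 hn)

theorem rpow_neg_le_rpow_neg_add {n a b h : ℝ} (hn : 0 ≤ n) (ha : 0 < a) (hb : 0 < b)
    (hh : 0 ≤ h) (hab : b ≤ a + h) :
    a ^ (-n) ≤ b ^ (-n) + n * h * a ^ (-(n + 1)) := by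
  have key : a ^ (-n) - n * h * a ^ (-(n + 1)) ≤ b ^ (-n) :=
    calc a ^ (-n) - n * h * a ^ (-(n + 1)) = a ^ (-n) * (1 - n * (h / a)) := by
          rw [neg_add, Real.rpow_add ha, Real.rpow_neg_one]; ring
      _ ≤ a ^ (-n) * (1 + h / a) ^ (-n) := by
          gcongr; exact one_sub_mul_le_one_add_rpow_neg hn (by positivity)
      _ = (a + h) ^ (-n) := by
          rw [← Real.mul_rpow ha.le (by positivity), mul_add, mul_one, mul_div_cancel₀ h ha.ne']
      _ ≤ b ^ (-n) := Real.rpow_le_rpow_of_nonpos hb hab (neg_nonpos.2 hn)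
  linarith

section UpperGrowth

variable {X : Type*} [PseudoMetricSpace X]

theorem compl_ball_subset_iUnion_dyadic_annuli {z : X} {ρ : ℝ} (hρ : 0 < ρ) :
    (ball z ρ)ᶜ ⊆ ⋃ k : ℕ, ball z (ρ * 2 ^ (k + 1)) \ ball z (ρ * 2 ^ k) := by
  intro x hx
  have hρx : ρ ≤ dist x z := not_lt.1 hx
  obtain ⟨k, hk, hk'⟩ := exists_nat_pow_near ((one_le_div hρ).2 hρx) one_lt_two
  exact mem_iUnion.2 ⟨k, (div_lt_iff₀' hρ).1 hk', not_lt.2 ((le_div_iff₀' hρ).1 hk)⟩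

variable [MeasurableSpace X]

/-- The growth condition `μ(B(z,r)) ≤ C rⁿ`, `r > 0`, at a single point `z`, which need not lie in
the support of `μ`. -/
def UpperGrowthAt (μ : Measure X) (C n : ℝ) (z : X) : Prop :=
  ∀ r : ℝ, 0 < r → μ (ball z r) ≤ ENNReal.ofReal (C * r ^ n)

variable {μ : Measure X} {z w : X} {C n m ρ r : ℝ} {S : Set X}

theorem UpperGrowthAt.measure_lt_top (hz : UpperGrowthAt μ C n z) (hS : Bornology.IsBounded S) :
    μ S < ⊤ := by
  obtain ⟨r, hr, hSr⟩ := hS.subset_ball_lt 0 z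
  exact (measure_mono hSr).trans_lt ((hz r hr).trans_lt ENNReal.ofReal_lt_top)

theorem setLIntegral_dist_rpow_neg_le (hm : 0 ≤ m) (hρ : 0 < ρ) (hS : ∀ x ∈ S, ρ ≤ dist x z) :
    ∫⁻ x in S, ENNReal.ofReal (dist x z ^ (-m)) ∂μ ≤ ENNReal.ofReal (ρ ^ (-m)) * μ S :=
  calc ∫⁻ x in S, ENNReal.ofReal (dist x z ^ (-m)) ∂μ
      ≤ ∫⁻ _ in S, ENNReal.ofReal (ρ ^ (-m)) ∂μ :=
        setLIntegral_mono measurable_const fun x hx ↦ ENNReal.ofReal_le_ofReal <|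
          Real.rpow_le_rpow_of_nonpos hρ (hS x hx) (neg_nonpos.2 hm)
    _ = ENNReal.ofReal (ρ ^ (-m)) * μ S := setLIntegral_const _ _

theorem UpperGrowthAt.setLIntegral_annulus_le (hz : UpperGrowthAt μ C n z) (hm : 0 ≤ m)
    (hρ : 0 < ρ) (hr : 0 < r) :
    ∫⁻ x in ball z r \ ball z ρ, ENNReal.ofReal (dist x z ^ (-m)) ∂μ ≤
      ENNReal.ofReal (C * (r ^ n * ρ ^ (-m))) :=
  calc ∫⁻ x in ball z r \ ball z ρ, ENNReal.ofReal (dist x z ^ (-m)) ∂μ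
      ≤ ENNReal.ofReal (ρ ^ (-m)) * μ (ball z r \ ball z ρ) :=
        setLIntegral_dist_rpow_neg_le hm hρ fun _ hx ↦ not_lt.1 hx.2
    _ ≤ ENNReal.ofReal (ρ ^ (-m)) * ENNReal.ofReal (C * r ^ n) := by
        gcongr; exact (measure_mono sdiff_subset).trans (hz r hr)
    _ = ENNReal.ofReal (C * (r ^ n * ρ ^ (-m))) := by
        rw [← ENNReal.ofReal_mul (by positivity), mul_comm, mul_assoc]

theorem UpperGrowthAt.setLIntegral_compl_ball_le (hz : UpperGrowthAt μ C n z) (hm : 0 ≤ m)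
    (hnm : n < m) (hρ : 0 < ρ) :
    ∫⁻ x in (ball z ρ)ᶜ, ENNReal.ofReal (dist x z ^ (-m)) ∂μ ≤
      ENNReal.ofReal (C * (2 ^ n * ρ ^ (n - m) * (1 - 2 ^ (n - m))⁻¹)) := by
  set q : ℝ := 2 ^ (n - m)
  have hq₀ : 0 ≤ q := by positivity
  have hq₁ : q < 1 := Real.rpow_lt_one_of_one_lt_of_neg one_lt_two (sub_neg.2 hnm)
  have annulus_const (k : ℕ) :
      (ρ * 2 ^ (k + 1)) ^ n * (ρ * 2 ^ k) ^ (-m) = 2 ^ n * ρ ^ (n - m) * q ^ k := by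
    rw [pow_succ', mul_left_comm, Real.mul_rpow zero_le_two (by positivity), mul_assoc,
      ← Real.rpow_add (by positivity), ← sub_eq_add_neg,
      Real.mul_rpow hρ.le (by positivity), Real.rpow_pow_comm zero_le_two, mul_assoc]
  calc ∫⁻ x in (ball z ρ)ᶜ, ENNReal.ofReal (dist x z ^ (-m)) ∂μ
      ≤ ∑' k : ℕ, ∫⁻ x in ball z (ρ * 2 ^ (k + 1)) \ ball z (ρ * 2 ^ k),
          ENNReal.ofReal (dist x z ^ (-m)) ∂μ :=
        (lintegral_mono_set (compl_ball_subset_iUnion_dyadic_annuli hρ)).trans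
          (lintegral_iUnion_le _ _)
    _ ≤ ∑' k : ℕ, ENNReal.ofReal (C * (2 ^ n * ρ ^ (n - m) * q ^ k)) :=
        ENNReal.tsum_le_tsum fun k ↦ annulus_const k ▸
          hz.setLIntegral_annulus_le hm (by positivity) (by positivity)
    _ = ENNReal.ofReal C * ∑' k : ℕ, ENNReal.ofReal (2 ^ n * ρ ^ (n - m) * q ^ k) := by
        rw [← ENNReal.tsum_mul_left]
        exact tsum_congr fun k ↦ ENNReal.ofReal_mul' (by positivity)
    _ = ENNReal.ofReal (C * (2 ^ n * ρ ^ (n - m) * (1 - q)⁻¹)) := by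
        have : 0 ≤ (1 - q)⁻¹ := inv_nonneg.2 (sub_nonneg.2 hq₁.le)
        rw [← ENNReal.ofReal_tsum_of_nonneg (fun k ↦ by positivity)
          ((summable_geometric_of_lt_one hq₀ hq₁).mul_left _), tsum_mul_left,
          tsum_geometric_of_lt_one hq₀ hq₁, ← ENNReal.ofReal_mul' (by positivity)]

theorem UpperGrowthAt.setLIntegral_dist_rpow_neg_le_add [OpensMeasurableSpace X]
    (hz : UpperGrowthAt μ C n z) (hn : 0 ≤ n) (hρ : 0 < ρ) (hSz : S ⊆ (ball z ρ)ᶜ)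
    (hSw : ∀ x ∈ S, 0 < dist x w) :
    ∫⁻ x in S, ENNReal.ofReal (dist x z ^ (-n)) ∂μ ≤
      ∫⁻ x in S, ENNReal.ofReal (dist x w ^ (-n)) ∂μ +
        ENNReal.ofReal (C * (n * 2 ^ (n + 1) * (dist z w / ρ))) := by
  have hdist (u : X) : Measurable fun x ↦ dist x u :=
    (continuous_id.dist continuous_const).measurable
  have tail : ∫⁻ x in S, ENNReal.ofReal (dist x z ^ (-(n + 1))) ∂μ ≤
      ENNReal.ofReal (C * (2 ^ (n + 1) / ρ)) := by
    refine ((lintegral_mono_set hSz).trans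
      (hz.setLIntegral_compl_ball_le (by positivity) (lt_add_one n) hρ)).trans_eq ?_
    rw [sub_add_cancel_left, Real.rpow_neg_one, Real.rpow_neg_one, Real.rpow_add_one two_ne_zero]
    ring_nf
  calc ∫⁻ x in S, ENNReal.ofReal (dist x z ^ (-n)) ∂μ
      ≤ ∫⁻ x in S, (ENNReal.ofReal (dist x w ^ (-n)) +
          ENNReal.ofReal (n * dist z w) * ENNReal.ofReal (dist x z ^ (-(n + 1)))) ∂μ := by
        refine setLIntegral_mono (by fun_prop) fun x hx ↦ ?_
        rw [← ENNReal.ofReal_mul (by positivity), ← ENNReal.ofReal_add (by positivity)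
          (by positivity)]
        exact ENNReal.ofReal_le_ofReal <| rpow_neg_le_rpow_neg_add hn
          (hρ.trans_le (not_lt.1 (hSz hx))) (hSw x hx) dist_nonneg (dist_triangle x z w)
    _ = ∫⁻ x in S, ENNReal.ofReal (dist x w ^ (-n)) ∂μ + ENNReal.ofReal (n * dist z w) *
          ∫⁻ x in S, ENNReal.ofReal (dist x z ^ (-(n + 1))) ∂μ := by
        rw [lintegral_add_left (by fun_prop), lintegral_const_mul _ (by fun_prop)]
    _ ≤ ∫⁻ x in S, ENNReal.ofReal (dist x w ^ (-n)) ∂μ + ENNReal.ofReal (n * dist z w) *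
          ENNReal.ofReal (C * (2 ^ (n + 1) / ρ)) := by gcongr
    _ = _ := by
        rw [← ENNReal.ofReal_mul (by positivity)]
        ring_nf

end UpperGrowth

theorem dist_lt_of_forall_abs_coord_sub_le {x y : Euc d} {t : ℝ} (ht : 0 < t)
    (hxy : ∀ i, |x i - y i| ≤ t) : dist x y < (d + 1) * t := by
  rw [EuclideanSpace.dist_eq, Real.sqrt_lt' (by positivity)]
  calc ∑ i, dist (x i) (y i) ^ 2 ≤ ∑ _i : Fin d, t ^ 2 := by
        gcongr with i; exact hxy i
    _ = d * t ^ 2 := by simp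
    _ < ((d + 1) * t) ^ 2 := by
        rw [mul_pow]; gcongr; nlinarith [(d.cast_nonneg : (0 : ℝ) ≤ d)]

namespace Cube

variable {P Q R : Cube d} {x : Euc d}

theorem half_side_lt_dist_of_notMem (hx : x ∉ Q.toSet) : Q.side / 2 < dist x Q.center := by
  simp only [toSet, mem_ofPred_eq, not_forall, not_le] at hx
  obtain ⟨i, hi⟩ := hx
  exact hi.trans_le (PiLp.dist_apply_le x Q.center i)

theorem toSet_subset_ball (hQ : 0 < Q.side) :
    Q.toSet ⊆ ball Q.center ((d + 1) * (Q.side / 2)) :=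
  fun _ hx ↦ dist_lt_of_forall_abs_coord_sub_le (half_pos hQ) hx

theorem center_mem_toSet (hQ : 0 ≤ Q.side) : Q.center ∈ Q.toSet := fun i ↦ by
  rw [sub_self, abs_zero]; positivity

theorem side_le_side_encl (Q R : Cube d) : Q.side ≤ (Q.encl R).side := le_max_left _ _

theorem two_mul_abs_sub_add_side_le_side_encl (Q R : Cube d) (i : Fin d) :
    2 * |R.center i - Q.center i| + R.side ≤ (Q.encl R).side :=
  (le_ciSup (f := fun i ↦ 2 * |R.center i - Q.center i| + R.side)
    (Set.finite_range _).bddAbove i).trans (le_max_right _ _)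

theorem toSet_subset_toSet_encl (Q R : Cube d) : R.toSet ⊆ (Q.encl R).toSet := fun x hx i ↦ by
  have hside := two_mul_abs_sub_add_side_le_side_encl Q R i
  have htri := abs_sub_le (x i) (R.center i) (Q.center i)
  change |x i - Q.center i| ≤ _
  linarith [hx i]

theorem dist_center_lt_mul_half_side_encl (hP : 0 < P.side) (hQ : 0 ≤ Q.side) :
    dist P.center Q.center < (d + 1) * ((P.encl Q).side / 2) := by
  rw [dist_comm]
  exact toSet_subset_ball (hP.trans_le (side_le_side_encl P Q))
    (toSet_subset_toSet_encl P Q (center_mem_toSet hQ))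

theorem side_encl_le_add (hP : 0 ≤ P.side) (hQ : 0 ≤ Q.side) :
    (P.encl R).side ≤ (P.encl Q).side + (Q.encl R).side := by
  have hPQ := side_le_side_encl P Q
  have hQR := side_le_side_encl Q R
  refine max_le (by linarith) (Real.iSup_le (fun i ↦ ?_) (by linarith))
  have htri := abs_sub_le (R.center i) (Q.center i) (P.center i)
  linarith [two_mul_abs_sub_add_side_le_side_encl P Q i,
    two_mul_abs_sub_add_side_le_side_encl Q R i]

theorem side_encl_add_side_encl_div_six_le_dist (hQ : 0 ≤ Q.side) (hxPQ : x ∉ (P.encl Q).toSet)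
    (hxQR : x ∉ (Q.encl R).toSet) :
    ((P.encl Q).side + (Q.encl R).side) / 6 ≤ dist x P.center := by
  have hM : (P.encl Q).side / 2 < dist x P.center := half_side_lt_dist_of_notMem hxPQ
  simp only [toSet, mem_ofPred_eq, not_forall, not_le] at hxQR
  obtain ⟨i, hi⟩ := hxQR
  have hi' : (Q.encl R).side / 2 < |x i - Q.center i| := hi
  have htri := abs_sub_le (x i) (P.center i) (Q.center i)
  have hPQ := two_mul_abs_sub_add_side_le_side_encl P Q i
  rw [abs_sub_comm] at hPQ
  have hxP : |x i - P.center i| ≤ dist x P.center := PiLp.dist_apply_le x P.center i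
  -- Combine the two lower bounds `ℓ(P_Q)/2` and `ℓ(Q_R)/2 - ℓ(P_Q)/2` for the distance
  -- with weights `2/3` and `1/3`.
  linarith

theorem encl_diff_subset_annulus (hP : 0 < P.side) (hQ : 0 ≤ Q.side) :
    (P.encl R).toSet \ ((P.encl Q).toSet ∪ (Q.encl R).toSet) ⊆
      ball P.center ((d + 1) * (((P.encl Q).side + (Q.encl R).side) / 2)) \
        ball P.center (((P.encl Q).side + (Q.encl R).side) / 6) := by
  rintro x ⟨hxPR, hx⟩
  rw [mem_union, not_or] at hx
  refine ⟨ball_subset_ball ?_ (toSet_subset_ball (hP.trans_le (side_le_side_encl P R)) hxPR),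
    not_lt.2 (side_encl_add_side_encl_div_six_le_dist hQ hx.1 hx.2)⟩
  gcongr
  exact side_encl_le_add hP.le hQ

end Cube

/-- One of the two integrals in the definition of `δ(Q,R)`, with values in `[0,∞]`. -/
def halfDelta (μ : Measure (Euc d)) (n : ℝ) (Q R : Cube d) : ℝ≥0∞ :=
  ∫⁻ x in (Q.encl R).toSet \ Q.toSet, ENNReal.ofReal (dist x Q.center ^ (-n)) ∂μ

/-- The error term in the quasi-triangle inequality, as obtained from the growth constant `C` and
exponent `n` at the center of one cube. Both summands are truncated at `0`, as `C` may be
negative. -/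
def quasiTriangleConst (d : ℕ) (n C : ℝ) : ℝ≥0 :=
  (C * (n * 2 ^ (n + 1) * (d + 1))).toNNReal + (C * (3 * (d + 1)) ^ n).toNNReal

section Triangle

variable {μ : Measure (Euc d)} {n C : ℝ} {P Q R : Cube d}

theorem cdelta_eq_max_toReal (μ : Measure (Euc d)) (n : ℝ) (Q R : Cube d) :
    cdelta μ n Q R = max (halfDelta μ n Q R).toReal (halfDelta μ n R Q).toReal := by
  have half (Q R : Cube d) : ∫ x in (Q.encl R).toSet \ Q.toSet, ‖x - Q.center‖ ^ (-n) ∂μ =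
      (halfDelta μ n Q R).toReal := by
    simp only [halfDelta, dist_eq_norm]
    exact integral_eq_lintegral_of_nonneg_ae (Eventually.of_forall fun x ↦ by positivity)
      (Measurable.aestronglyMeasurable (by fun_prop))
  rw [cdelta, half, half]

theorem UpperGrowthAt.halfDelta_ne_top {z : Euc d} (hz : UpperGrowthAt μ C n z) (hn : 0 ≤ n)
    (hQ : 0 < Q.side) : halfDelta μ n Q R ≠ ⊤ := by
  have hbdd : Bornology.IsBounded ((Q.encl R).toSet \ Q.toSet) :=
    isBounded_ball.subset <|
      sdiff_subset.trans (Cube.toSet_subset_ball (hQ.trans_le (Q.side_le_side_encl R)))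
  exact ne_top_of_le_ne_top
    (ENNReal.mul_ne_top ENNReal.ofReal_ne_top (hz.measure_lt_top hbdd).ne)
    (setLIntegral_dist_rpow_neg_le hn (half_pos hQ) fun _ hx ↦
      (Cube.half_side_lt_dist_of_notMem hx.2).le)

theorem UpperGrowthAt.setLIntegral_encl_diff_encl_le (hμ : UpperGrowthAt μ C n P.center)
    (hn : 0 ≤ n) (hP : 0 < P.side) (hQ : 0 < Q.side) :
    ∫⁻ x in (Q.encl R).toSet \ (P.encl Q).toSet, ENNReal.ofReal (dist x P.center ^ (-n)) ∂μ ≤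
      halfDelta μ n Q R + ENNReal.ofReal (C * (n * 2 ^ (n + 1) * (d + 1))) := by
  have hM : 0 < (P.encl Q).side / 2 := half_pos (hP.trans_le (P.side_le_side_encl Q))
  have hfar : (Q.encl R).toSet \ (P.encl Q).toSet ⊆ (ball P.center ((P.encl Q).side / 2))ᶜ :=
    fun x hx ↦ not_lt.2 (Cube.half_side_lt_dist_of_notMem hx.2).le
  have hsub : (Q.encl R).toSet \ (P.encl Q).toSet ⊆ (Q.encl R).toSet \ Q.toSet :=
    sdiff_subset_sdiff_right (P.toSet_subset_toSet_encl Q)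
  have hdist : dist P.center Q.center / ((P.encl Q).side / 2) ≤ d + 1 :=
    (div_le_iff₀ hM).2 (Cube.dist_center_lt_mul_half_side_encl hP hQ.le).le
  refine (hμ.setLIntegral_dist_rpow_neg_le_add hn hM hfar fun x hx ↦
    (half_pos hQ).trans (Cube.half_side_lt_dist_of_notMem (hsub hx).2)).trans
      (add_le_add (lintegral_mono_set hsub) ?_)
  rw [ENNReal.ofReal_mul' (p := C) (by positivity), ENNReal.ofReal_mul' (p := C) (by positivity)]
  gcongr

theorem UpperGrowthAt.setLIntegral_encl_diff_union_le (hμ : UpperGrowthAt μ C n P.center)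
    (hn : 0 ≤ n) (hP : 0 < P.side) (hQ : 0 < Q.side) :
    ∫⁻ x in (P.encl R).toSet \ ((P.encl Q).toSet ∪ (Q.encl R).toSet),
        ENNReal.ofReal (dist x P.center ^ (-n)) ∂μ ≤
      ENNReal.ofReal (C * (3 * (d + 1)) ^ n) := by
  set t := (P.encl Q).side + (Q.encl R).side
  have ht : 0 < t := add_pos (hP.trans_le (P.side_le_side_encl Q))
    (hQ.trans_le (Q.side_le_side_encl R))
  refine ((lintegral_mono_set (Cube.encl_diff_subset_annulus hP hQ.le)).trans
    (hμ.setLIntegral_annulus_le hn (by positivity) (by positivity))).trans_eq ?_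
  have hratio : (d + 1) * (t / 2) = 3 * (d + 1) * (t / 6) := by ring
  rw [hratio, Real.mul_rpow (by positivity) (by positivity), mul_assoc,
    ← Real.rpow_add (by positivity), add_neg_cancel, Real.rpow_zero, mul_one]

theorem UpperGrowthAt.halfDelta_triangle (hμ : UpperGrowthAt μ C n P.center) (hn : 0 ≤ n)
    (hP : 0 < P.side) (hQ : 0 < Q.side) :
    halfDelta μ n P R ≤ quasiTriangleConst d n C + halfDelta μ n P Q + halfDelta μ n Q R := by
  have hcover : (P.encl R).toSet \ P.toSet ⊆ (P.encl Q).toSet \ P.toSet ∪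
      ((Q.encl R).toSet \ (P.encl Q).toSet ∪
        (P.encl R).toSet \ ((P.encl Q).toSet ∪ (Q.encl R).toSet)) := by grind
  calc halfDelta μ n P R
      ≤ halfDelta μ n P Q + (halfDelta μ n Q R +
          ENNReal.ofReal (C * (n * 2 ^ (n + 1) * (d + 1))) +
            ENNReal.ofReal (C * (3 * (d + 1)) ^ n)) :=
        (lintegral_mono_set hcover).trans <| (lintegral_union_le _ _ _).trans <|
          add_le_add le_rfl <| (lintegral_union_le _ _ _).trans <|
            add_le_add (hμ.setLIntegral_encl_diff_encl_le hn hP hQ)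
              (hμ.setLIntegral_encl_diff_union_le hn hP hQ)
    _ = quasiTriangleConst d n C + halfDelta μ n P Q + halfDelta μ n Q R := by
        rw [quasiTriangleConst, ENNReal.coe_add]
        simp only [ENNReal.ofReal]
        ring

theorem UpperGrowthAt.toReal_halfDelta_triangle (hμ : UpperGrowthAt μ C n P.center) (hn : 0 ≤ n)
    (hP : 0 < P.side) (hQ : 0 < Q.side) :
    (halfDelta μ n P R).toReal ≤
      quasiTriangleConst d n C + (halfDelta μ n P Q).toReal + (halfDelta μ n Q R).toReal := by
  have hPQ : halfDelta μ n P Q ≠ ⊤ := hμ.halfDelta_ne_top hn hP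
  have hQR : halfDelta μ n Q R ≠ ⊤ := hμ.halfDelta_ne_top hn hQ
  have hsum := ENNReal.add_ne_top.2 ⟨ENNReal.coe_ne_top (r := quasiTriangleConst d n C), hPQ⟩
  rw [← ENNReal.coe_toReal, ← ENNReal.toReal_add ENNReal.coe_ne_top hPQ,
    ← ENNReal.toReal_add hsum hQR]
  exact ENNReal.toReal_mono (ENNReal.add_ne_top.2 ⟨hsum, hQR⟩) (hμ.halfDelta_triangle hn hP hQ)

end Triangle

theorem cdelta_triangle_general {d : ℕ} {n C : ℝ} (hn : 0 ≤ n) {μ : Measure (Euc d)}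
    {P Q R : Cube d} (hμP : UpperGrowthAt μ C n P.center)
    (hμR : UpperGrowthAt μ C n R.center)
    (hP : 0 < P.side) (hQ : 0 < Q.side) (hR : 0 < R.side) :
    cdelta μ n P R ≤ quasiTriangleConst d n C + cdelta μ n P Q + cdelta μ n Q R := by
  simp only [cdelta_eq_max_toReal]
  refine max_le ((hμP.toReal_halfDelta_triangle (Q := Q) hn hP hQ).trans ?_)
    ((hμR.toReal_halfDelta_triangle (Q := Q) hn hR hQ).trans ?_)
  · gcongr <;> exact le_max_left _ _
  · rw [add_right_comm]
    gcongr <;> exact le_max_right _ _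

/-- Quasi-triangle inequality for `δ`: `δ(P,R) ≤ C₆ + δ(P,Q) + δ(Q,R)`. -/
theorem cdelta_triangle {d : ℕ} (n C₀ : ℝ) (hn : 0 < n) (hnd : n ≤ d) :
    ∃ C₆ : ℝ, ∀ (μ : Measure (Euc d)) [IsLocallyFiniteMeasure μ], GrowthCond μ C₀ n →
      ∀ P Q R : Cube d, IsCube μ P → IsCube μ Q → IsCube μ R →
      cdelta μ n P R ≤ C₆ + cdelta μ n P Q + cdelta μ n Q R := by
  exact ⟨quasiTriangleConst d n C₀, fun μ _ hμ P Q R hP hQ hR ↦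
    cdelta_triangle_general hn.le (hμ _ hP.1) (hμ _ hR.1) hP.2 hQ.2 hR.2⟩
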